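/- arXiv:hep-th/9405116 — 2 statements merged into one kernel-verified Lean document; each statement's English description precedes it below -/
import Mathlib

section
/- Let g(t) be irrational (not the Laurent expansion at ∞ of a rational function). Then for every matrix A ∈ p_{g(t)}^{-1}(f) (a loop matrix of the form f + upper triangular part), there exists a unique pair (X, B) with X in the nilpotent group N(z) and B a Frobenius matrix (first row arbitrary, subdiagonal 1's, zeros elsewhere), such that -zX' + XA = BX. -/
noncomputable section

/-- An element of `ℂ[t] ⊗ ℂ((z))`, modeled as a `ℤ`-indexed family of polynomials in `t`
(the coefficient of `zᵏ`); membership in Laurent series is the predicate `lsBdd`. -/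
abbrev LS := ℤ → Polynomial ℂ

/-- Support bounded below: a genuine Laurent series in `z`. -/
def lsBdd (h : LS) : Prop := ∃ N : ℤ, ∀ k : ℤ, k < N → h k = 0

/-- The constant `1`. -/
def lsOne : LS := fun k => if k = 0 then 1 else 0

/-- Cauchy product of Laurent series. -/
def lsMul (a b : LS) : LS := fun n => ∑ᶠ k : ℤ, a k * b (n - k)

/-- Entrywise derivative `d/dz`. -/
def lsDer (a : LS) : LS := fun n => (n + 1) • a (n + 1)

/-- Multiplication by `z`. -/
def zShift (a : LS) : LS := fun n => a (n - 1)

/-- Product of (infinite) matrices with entries in `ℂ[t]⊗ℂ((z))`. -/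
def matMul (A B : ℕ → ℕ → LS) : ℕ → ℕ → LS := fun i j => ∑ᶠ k : ℕ, lsMul (A i k) (B k j)

/-- The algebra `gl`: Laurent entries, band condition `a_{ij} = 0` for `i > j + N`, and,
outside finitely many exceptional rows: each diagonal `i ↦ a_{i,i±n}` is polynomial in `i`,
and the integrality condition (iii): for every positive integer `l`, `a_{ij}(l) = 0`
whenever `i < l ≤ j`. -/
def GLmat (A : ℕ → ℕ → LS) : Prop :=
  (∀ i j, lsBdd (A i j)) ∧
  (∃ N : ℕ, ∀ i j : ℕ, j + N < i → A i j = 0) ∧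
  ∃ Rows : Finset ℕ,
    (∀ n : ℕ, ∃ m : ℕ, ∃ c : ℕ → LS, ∀ i : ℕ, i ∉ Rows →
      A i (i + n) = fun z => ∑ k ∈ Finset.range m, ((i : ℂ) ^ k) • c k z) ∧
    (∀ n : ℕ, ∃ m : ℕ, ∃ c : ℕ → LS, ∀ i : ℕ, i ∉ Rows →
      A (i + n) i = fun z => ∑ k ∈ Finset.range m, ((i : ℂ) ^ k) • c k z) ∧
    (∀ i : ℕ, i ∉ Rows → ∀ l : ℕ, 0 < l → ∀ j : ℕ, i < l → l ≤ j →
      ∀ z : ℤ, (A i j z).eval (l : ℂ) = 0)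

/-- `g(t) ∈ t⁻¹ℂ[[t⁻¹]]`, `g = Σ_{n≥0} g_n t^{-1-n}`, is the expansion at `∞` of a rational
function iff its coefficients eventually satisfy a linear recurrence. -/
def RationalTail (g : ℕ → ℂ) : Prop :=
  ∃ q : Polynomial ℂ, q ≠ 0 ∧ ∃ N : ℕ, ∀ n ≥ N,
    ∑ k ∈ Finset.range (q.natDegree + 1), q.coeff k * g (n + k) = 0

/-- The lower shift matrix `f`. -/
def fSh : ℕ → ℕ → LS := fun i j => if i = j + 1 then lsOne else 0

/-- Frobenius matrix: arbitrary Laurent first row, `1`'s on the subdiagonal, `0` elsewhere. -/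
def IsFrob (B : ℕ → ℕ → LS) : Prop :=
  (∀ j, lsBdd (B 0 j)) ∧ (∀ j, B (j + 1) j = lsOne) ∧
  (∀ i j, 0 < i → i ≠ j + 1 → B i j = 0)

/-- Element of the group `N(z)`: identity plus strictly upper triangular, lying in `gl`. -/
def IsUnipUT (X : ℕ → ℕ → LS) : Prop :=
  (∀ i, X i i = lsOne) ∧ (∀ i j, j < i → X i j = 0) ∧ GLmat X

/-!
Write `X` and `b` through their superdiagonals `D n : i ↦ X i (i + n)`. Rows `i + 1` of
`-z X' + X (f + b) = B X` involve only the subdiagonal of `B` and read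
`D (n + 1) i - D (n + 1) (i + 1) = R n (i + 1)`, where `R n` depends on `b` and on `D 0, …, D n`
only. The partial sums of a polynomial sequence are the values of a polynomial `Q`, so the
polynomial solutions are `D (n + 1) i = c - Q i`. The integrality condition at `l = i + 1` holds for
`c = Q (t - 1)`, and it propagates to the other `l` along the recursion. Two admissible `c` differ
by a Laurent series divisible by `t - l` for all large `l`, hence by zero, so every superdiagonal of
`X` exists and is unique. Row `0` then determines the first row of `B` by forward substitution,
because `X` is unitriangular.
-/

open Polynomial Filter

open scoped fwdDiff

section ForwardDifference

variable {G H : Type*} [AddCommGroup G] [AddCommGroup H]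

lemma fwdDiff_iter_map (φ : G →+ H) (a : ℕ → G) (m i : ℕ) :
    (Δ_[1])^[m] (fun j ↦ φ (a j)) i = φ ((Δ_[1])^[m] a i) := by
  simp only [fwdDiff_iter_eq_sum_shift, map_sum, map_zsmul]

lemma fwdDiff_iter_congr_of_ge {a b : ℕ → G} {M : ℕ} (h : ∀ i ≥ M, a i = b i) (m : ℕ)
    {i : ℕ} (hi : M ≤ i) : (Δ_[1])^[m] a i = (Δ_[1])^[m] b i := by
  simp only [fwdDiff_iter_eq_sum_shift]
  exact Finset.sum_congr rfl fun k _ ↦ by rw [h _ (hi.trans (Nat.le_add_right i _))]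

lemma fwdDiff_iter_eq_zero_of_le {a : ℕ → G} {M m k : ℕ}
    (h : ∀ i ≥ M, (Δ_[1])^[m] a i = 0) (hk : m ≤ k) {i : ℕ} (hi : M ≤ i) :
    (Δ_[1])^[k] a i = 0 := by
  obtain ⟨d, rfl⟩ := Nat.exists_eq_add_of_le' hk
  rw [Function.iterate_add_apply, fwdDiff_iter_congr_of_ge (b := fun _ ↦ 0) h d hi,
    fwdDiff_iter_eq_sum_shift]
  simp only [smul_zero, Finset.sum_const_zero]

lemma fwdDiff_iter_comp_natCast {R : Type*} [Ring R] (f : R → G) (m i : ℕ) :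
    (Δ_[1])^[m] (fun j : ℕ ↦ f j) i = (Δ_[1])^[m] f (i : R) := by
  simp only [fwdDiff_iter_eq_sum_shift, smul_eq_mul, mul_one, nsmul_eq_mul, Nat.cast_add]

lemma fwdDiff_sum_range (a : ℕ → G) : Δ_[1] (fun i ↦ ∑ r ∈ Finset.range i, a r) = a := by
  funext i
  rw [fwdDiff, Finset.sum_range_succ, add_sub_cancel_left]

end ForwardDifference

section PolynomialSequences

variable {A : Type*} [CommRing A]

/-- The algebra of sequences in `A` whose terms of index `≥ M` are the values of a polynomial. -/
def polynomialFrom (M : ℕ) : Subalgebra A (ℕ → A) where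
  carrier := {a | ∃ P : A[X], ∀ i ≥ M, a i = P.eval (i : A)}
  mul_mem' := by
    rintro a b ⟨P, hP⟩ ⟨Q, hQ⟩
    exact ⟨P * Q, fun i hi ↦ by simp [hP i hi, hQ i hi]⟩
  add_mem' := by
    rintro a b ⟨P, hP⟩ ⟨Q, hQ⟩
    exact ⟨P + Q, fun i hi ↦ by simp [hP i hi, hQ i hi]⟩
  algebraMap_mem' c := ⟨C c, fun i _ ↦ by simp⟩

lemma shift_mem_polynomialFrom {M : ℕ} {a : ℕ → A} (ha : a ∈ polynomialFrom M) (m : ℕ) :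
    (fun i ↦ a (i + m)) ∈ polynomialFrom M := by
  obtain ⟨P, hP⟩ := ha
  refine ⟨P.comp (X + C (m : A)), fun i hi ↦ ?_⟩
  simp [hP (i + m) (hi.trans (Nat.le_add_right i m))]

lemma exists_fwdDiff_iter_eq_zero {M : ℕ} {a : ℕ → A} (ha : a ∈ polynomialFrom M) :
    ∃ m, ∀ i ≥ M, (Δ_[1])^[m] a i = 0 := by
  obtain ⟨P, hP⟩ := ha
  refine ⟨P.natDegree + 1, fun i hi ↦ ?_⟩
  rw [fwdDiff_iter_congr_of_ge hP _ hi, fwdDiff_iter_comp_natCast (fun x ↦ P.eval x),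
    P.fwdDiff_iter_degree_add_one_eq_zero, Pi.zero_apply]

variable [Algebra ℚ A]

lemma exists_eval_natCast_eq_choose (k : ℕ) :
    ∃ P : A[X], ∀ n : ℕ, P.eval (n : A) = n.choose k := by
  refine ⟨(C ((k.factorial : ℚ)⁻¹) * descPochhammer ℚ k).map (algebraMap ℚ A), fun n ↦ ?_⟩
  have hk : (k.factorial : ℚ) ≠ 0 := Nat.cast_ne_zero.mpr k.factorial_ne_zero
  rw [← map_natCast (algebraMap ℚ A) n, eval_map_algebraMap, aeval_algebraMap_apply,
    coe_aeval_eq_eval, eval_mul, eval_C, descPochhammer_eval_eq_descFactorial,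
    Nat.descFactorial_eq_factorial_mul_choose, Nat.cast_mul, inv_mul_cancel_left₀ hk, map_natCast]

/-- Newton's forward difference formula. -/
lemma mem_polynomialFrom_of_fwdDiff_iter_eq_zero {M m : ℕ} {a : ℕ → A}
    (h : ∀ i ≥ M, (Δ_[1])^[m] a i = 0) : a ∈ polynomialFrom M := by
  choose binom hbinom using exists_eval_natCast_eq_choose (A := A)
  refine ⟨∑ k ∈ Finset.range m, C ((Δ_[1])^[k] a M) * (binom k).comp (X - C (M : A)),
    fun i hi ↦ ?_⟩
  obtain ⟨n, rfl⟩ := Nat.exists_eq_add_of_le hi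
  have newton : a (M + n) = ∑ k ∈ Finset.range (n + 1), n.choose k • (Δ_[1])^[k] a M := by
    simpa using shift_eq_sum_fwdDiff_iter 1 a n M
  rw [newton, eval_finsetSum]
  refine Finset.sum_congr_of_eq_on_inter (fun k _ hk ↦ ?_) (fun k _ hk ↦ ?_) fun k _ _ ↦ ?_
  · rw [fwdDiff_iter_eq_zero_of_le h (by simpa using hk) le_rfl, smul_zero]
  · have hnk : n.choose k = 0 := Nat.choose_eq_zero_of_lt (by simpa using hk)
    simp [hbinom, hnk]
  · simp [hbinom, mul_comm]

lemma map_mem_polynomialFrom (φ : A →+ A) {M : ℕ} {a : ℕ → A} (ha : a ∈ polynomialFrom M) :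
    (fun i ↦ φ (a i)) ∈ polynomialFrom M := by
  obtain ⟨m, hm⟩ := exists_fwdDiff_iter_eq_zero ha
  refine mem_polynomialFrom_of_fwdDiff_iter_eq_zero (m := m) fun i hi ↦ ?_
  rw [fwdDiff_iter_map, hm i hi, map_zero]

lemma sum_range_mem_polynomialFrom {M : ℕ} {a : ℕ → A} (ha : a ∈ polynomialFrom M) :
    (fun i ↦ ∑ r ∈ Finset.range i, a r) ∈ polynomialFrom M := by
  obtain ⟨m, hm⟩ := exists_fwdDiff_iter_eq_zero ha
  refine mem_polynomialFrom_of_fwdDiff_iter_eq_zero (m := m + 1) fun i hi ↦ ?_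
  rw [Function.iterate_succ_apply, fwdDiff_sum_range, hm i hi]

end PolynomialSequences

section Diagonals

variable {A : Type*} [CommRing A] {τ : A} {M m n : ℕ}

/-- The sequences that may occur as `n`-th superdiagonal `i ↦ U i (i + n)` of an element of `gl`
over `A`, the exceptional rows being those of index `< M` and `τ` playing the role of `t`. -/
def glDiagonal (τ : A) (M n : ℕ) : AddSubgroup (ℕ → A) where
  carrier := {a | a ∈ polynomialFrom M ∧ ∀ i ≥ M, ∀ l ∈ Set.Ioc i (i + n), τ - (l : A) ∣ a i}
  zero_mem' := ⟨zero_mem _, fun _ _ _ _ ↦ dvd_zero _⟩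
  add_mem' ha hb :=
    ⟨add_mem ha.1 hb.1, fun i hi l hl ↦ dvd_add (ha.2 i hi l hl) (hb.2 i hi l hl)⟩
  neg_mem' ha := ⟨neg_mem ha.1, fun i hi l hl ↦ (ha.2 i hi l hl).neg_right⟩

lemma one_mem_glDiagonal : 1 ∈ glDiagonal τ M 0 :=
  ⟨one_mem _, fun _ _ _ hl ↦ absurd hl.2 (not_le.mpr hl.1)⟩

lemma mul_shift_mem_glDiagonal {a b : ℕ → A} (ha : a ∈ glDiagonal τ M m)
    (hb : b ∈ glDiagonal τ M n) :
    (fun i ↦ a i * b (i + m)) ∈ glDiagonal τ M (m + n) := by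
  refine ⟨mul_mem ha.1 (shift_mem_polynomialFrom hb.1 m), fun i hi l hl ↦ ?_⟩
  rcases le_or_gt l (i + m) with hlm | hlm
  · exact (ha.2 i hi l ⟨hl.1, hlm⟩).mul_right _
  · exact (hb.2 (i + m) (hi.trans (Nat.le_add_right i m)) l
      ⟨hlm, hl.2.trans_eq (add_assoc i m n).symm⟩).mul_left _

lemma map_mem_glDiagonal [Algebra ℚ A] {δ : A →+ A} (hδ : ∀ x, δ (τ * x) = τ * δ x) {a : ℕ → A}
    (ha : a ∈ glDiagonal τ M n) : (fun i ↦ δ (a i)) ∈ glDiagonal τ M n := by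
  refine ⟨map_mem_polynomialFrom δ ha.1, fun i hi l hl ↦ ?_⟩
  obtain ⟨y, hy⟩ := ha.2 i hi l hl
  refine ⟨δ y, ?_⟩
  beta_reduce
  rw [hy, sub_mul, map_sub, hδ, ← nsmul_eq_mul, map_nsmul, nsmul_eq_mul, ← sub_mul]

/-- `a` is the primitive of the sequence `r`, for the backward difference operator with its sign
reversed, whose additive constant is fixed by the integrality condition of `gl` at `l = i + 1`. -/
def IsNormalizedPrimitive (τ : A) (r a : ℕ → A) : Prop :=
  (∀ i, a i = a (i + 1) + r (i + 1)) ∧ ∀ᶠ i : ℕ in atTop, τ - (i + 1 : ℕ) ∣ a i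

lemma IsNormalizedPrimitive.unique
    (hτ : ∀ x : A, (∀ᶠ l : ℕ in atTop, τ - (l : A) ∣ x) → x = 0) {r a a' : ℕ → A}
    (ha : IsNormalizedPrimitive τ r a) (ha' : IsNormalizedPrimitive τ r a') : a = a' := by
  have hconst (i : ℕ) : a i - a' i = a 0 - a' 0 := by
    induction i with
    | zero => rfl
    | succ i ih => rw [← ih, ha.1 i, ha'.1 i, add_sub_add_right_eq_sub]
  have hzero : a 0 - a' 0 = 0 := by
    refine hτ _ ?_
    rw [← map_add_atTop_eq_nat 1, eventually_map]
    filter_upwards [ha.2, ha'.2] with i hi hi'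
    exact hconst i ▸ dvd_sub hi hi'
  exact funext fun i ↦ sub_eq_zero.mp ((hconst i).trans hzero)

/-- If `Q` interpolates the partial sums of `r`, the primitive `i ↦ Q (τ - 1) - Q i` is divisible
by `τ - (i + 1)`; the recursion carries this divisibility over to the other `l`. -/
lemma exists_isNormalizedPrimitive [Algebra ℚ A] {r : ℕ → A} (hr : r ∈ glDiagonal τ M n) :
    ∃ a ∈ glDiagonal τ M (n + 1), IsNormalizedPrimitive τ r a := by
  have hS := sum_range_mem_polynomialFrom (shift_mem_polynomialFrom hr.1 1)
  obtain ⟨Q, hQ⟩ := id hS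
  let a (i : ℕ) : A := Q.eval (τ - 1) - ∑ k ∈ Finset.range i, r (k + 1)
  have hstep (i : ℕ) : a i = a (i + 1) + r (i + 1) := by
    simp only [a, Finset.sum_range_succ]
    ring
  have hdvd (s : ℕ) (hs : s ≤ n) (i : ℕ) (hi : M ≤ i) : τ - (i + 1 + s : ℕ) ∣ a i := by
    induction s generalizing i with
    | zero =>
      have hnode : τ - (i + 1 + 0 : ℕ) = (τ - 1) - (i : A) := by push_cast; ring
      rw [hnode]
      simpa only [a, hQ i hi] using Q.sub_dvd_eval_sub (τ - 1) (i : A)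
    | succ s ih =>
      rw [hstep, show i + 1 + (s + 1) = i + 1 + 1 + s by ring]
      exact dvd_add (ih (by lia) (i + 1) (by lia)) (hr.2 (i + 1) (by lia) _ ⟨by lia, by lia⟩)
  refine ⟨a, ⟨sub_mem ((polynomialFrom M).algebraMap_mem _) hS, fun i hi l hl ↦ ?_⟩, hstep, ?_⟩
  · obtain ⟨s, rfl⟩ := Nat.exists_eq_add_of_le (Nat.succ_le_of_lt hl.1)
    exact hdvd s (by have := hl.2; lia) i hi
  · filter_upwards [eventually_ge_atTop M] with i hi using hdvd 0 n.zero_le i hi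

end Diagonals

section GaugeRecursion

variable {A : Type*} [CommRing A] {δ : A →+ A} {τ : A} {b D D' : ℕ → ℕ → A} {M : ℕ}

/-- The `n`-th superdiagonal of `-δ X + X b`, where `X` and `b` are upper triangular with
superdiagonals `D` and `b`. Only the superdiagonals `D 0, …, D n` enter, and the index type
`Fin (n + 1)` makes recursion on `n` possible. -/
def gaugeDiagonal (δ : A →+ A) (b : ℕ → ℕ → A) (n : ℕ) (D : Fin (n + 1) → ℕ → A) : ℕ → A :=
  fun i ↦ ∑ m, D m i * b (n - m) (i + m) - δ (D (Fin.last n) i)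

lemma gaugeDiagonal_mem_glDiagonal [Algebra ℚ A] (hδ : ∀ x, δ (τ * x) = τ * δ x) {n : ℕ}
    (hb : ∀ n, b n ∈ glDiagonal τ M n) {D : Fin (n + 1) → ℕ → A}
    (hD : ∀ m : Fin (n + 1), D m ∈ glDiagonal τ M m) :
    gaugeDiagonal δ b n D ∈ glDiagonal τ M n := by
  have hprod (m : Fin (n + 1)) : (fun i ↦ D m i * b (n - m) (i + m)) ∈ glDiagonal τ M n := by
    simpa only [Nat.add_sub_cancel' m.is_le] using mul_shift_mem_glDiagonal (hD m) (hb (n - m))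
  have hsum := sub_mem (sum_mem fun m (_ : m ∈ Finset.univ) ↦ hprod m)
    (map_mem_glDiagonal hδ (hD (Fin.last n)))
  convert hsum using 1
  funext i
  simp only [gaugeDiagonal, Pi.sub_apply, Finset.sum_apply]

/-- The superdiagonals `D` are those of a unipotent `X` such that every row `i + 1` of
`-δ X + X (f + b)` equals row `i` of `X`. -/
def IsGaugeSolution (δ : A →+ A) (b D : ℕ → ℕ → A) : Prop :=
  D 0 = 1 ∧ ∀ n i, D (n + 1) i = D (n + 1) (i + 1) + gaugeDiagonal δ b n (fun m ↦ D m) (i + 1)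

/-- The solution of the gauge recursion in `gl`, built one superdiagonal at a time; the choice is
arbitrary where no normalized primitive exists. -/
def gaugeSolution (δ : A →+ A) (τ : A) (b : ℕ → ℕ → A) : ℕ → ℕ → A
  | 0 => 1
  | n + 1 => Classical.epsilon
      (IsNormalizedPrimitive τ (gaugeDiagonal δ b n fun m ↦ gaugeSolution δ τ b m))
  decreasing_by exact m.isLt

variable (hτ : ∀ x : A, (∀ᶠ l : ℕ in atTop, τ - (l : A) ∣ x) → x = 0)
include hτ

lemma IsGaugeSolution.unique {M' : ℕ} (hD : IsGaugeSolution δ b D)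
    (hDM : ∀ n, D n ∈ glDiagonal τ M n) (hD' : IsGaugeSolution δ b D')
    (hDM' : ∀ n, D' n ∈ glDiagonal τ M' n) : D = D' := by
  have normalized {E : ℕ → ℕ → A} {N : ℕ} (hE : IsGaugeSolution δ b E)
      (hEN : ∀ n, E n ∈ glDiagonal τ N n) (n : ℕ) :
      IsNormalizedPrimitive τ (gaugeDiagonal δ b n fun m ↦ E m) (E (n + 1)) := by
    refine ⟨hE.2 n, ?_⟩
    filter_upwards [eventually_ge_atTop N] with i hi
      using (hEN (n + 1)).2 i hi (i + 1) ⟨by lia, by lia⟩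
  funext n
  induction n using Nat.strong_induction_on with
  | _ n ih =>
    cases n with
    | zero => rw [hD.1, hD'.1]
    | succ n =>
      have hprev : (fun m : Fin (n + 1) ↦ D m) = fun m : Fin (n + 1) ↦ D' m :=
        funext fun m ↦ ih m m.isLt
      exact (normalized hD hDM n).unique hτ (hprev ▸ normalized hD' hDM' n)

variable [Algebra ℚ A] (hδ : ∀ x, δ (τ * x) = τ * δ x) (hb : ∀ n, b n ∈ glDiagonal τ M n)
include hδ hb

lemma gaugeSolution_mem_glDiagonal (n : ℕ) : gaugeSolution δ τ b n ∈ glDiagonal τ M n := by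
  induction n using Nat.strong_induction_on with
  | _ n ih =>
    cases n with
    | zero => simpa only [gaugeSolution] using one_mem_glDiagonal
    | succ n =>
      obtain ⟨a, haM, ha⟩ := exists_isNormalizedPrimitive
        (gaugeDiagonal_mem_glDiagonal hδ hb fun m ↦ ih m m.isLt)
      rw [gaugeSolution, (Classical.epsilon_spec ⟨a, ha⟩).unique hτ ha]
      exact haM

lemma isGaugeSolution_gaugeSolution : IsGaugeSolution δ b (gaugeSolution δ τ b) := by
  refine ⟨by rw [gaugeSolution], fun n ↦ ?_⟩
  obtain ⟨a, -, ha⟩ := exists_isNormalizedPrimitive (gaugeDiagonal_mem_glDiagonal hδ hb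
    fun m : Fin (n + 1) ↦ gaugeSolution_mem_glDiagonal hτ hδ hb m)
  rw [gaugeSolution]
  exact (Classical.epsilon_spec ⟨a, ha⟩).1

theorem existsUnique_isGaugeSolution :
    ∃! D, IsGaugeSolution δ b D ∧ ∃ M, ∀ n, D n ∈ glDiagonal τ M n :=
  ⟨gaugeSolution δ τ b, ⟨isGaugeSolution_gaugeSolution hτ hδ hb, M,
    gaugeSolution_mem_glDiagonal hτ hδ hb⟩, fun _ ⟨hD, _, hDM⟩ ↦
      hD.unique hτ hDM (isGaugeSolution_gaugeSolution hτ hδ hb)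
        (gaugeSolution_mem_glDiagonal hτ hδ hb)⟩

end GaugeRecursion

section ForwardSubstitution

variable {A : Type*} [CommRing A]

/-- The row vector `r` with `r U = w`, for `U` upper unitriangular. -/
def forwardSubstitution (U : ℕ → ℕ → A) (w : ℕ → A) (j : ℕ) : A :=
  w j - ∑ k : Fin j, forwardSubstitution U w k * U k j
  decreasing_by exact k.isLt

lemma existsUnique_row_mul_unitriangular {U : ℕ → ℕ → A} (hU : ∀ j, U j j = 1) (w : ℕ → A) :
    ∃! r : ℕ → A, ∀ j, ∑ k ∈ Finset.range (j + 1), r k * U k j = w j := by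
  have split (r : ℕ → A) (j : ℕ) : ∑ k ∈ Finset.range (j + 1), r k * U k j =
      ∑ k : Fin j, r k * U k j + r j := by
    rw [Finset.sum_range_succ, Finset.sum_range, hU, mul_one]
  refine ⟨forwardSubstitution U w, fun j ↦ ?_, fun r hr ↦ funext fun j ↦ ?_⟩
  · rw [split, forwardSubstitution.eq_def U w j, add_sub_cancel]
  · induction j using Nat.strong_induction_on with
    | _ j ih =>
      have hprev : ∑ k : Fin j, r k * U k j = ∑ k : Fin j, forwardSubstitution U w k * U k j :=
        Fintype.sum_congr _ _ fun k ↦ by rw [ih k k.isLt]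
      rw [forwardSubstitution, ← hr j, split, hprev, add_sub_cancel_left]

end ForwardSubstitution

section LaurentSeries

/-- The algebra `ℂ[t] ⊗ ℂ((z))`, enlarged to all Laurent series in `z` over `ℂ[t]` as in `LS`. -/
abbrev Loop : Type := LaurentSeries ℂ[X]

/-- The element `t` of `Loop`. -/
def loopT : Loop := HahnSeries.C X

/-- The operator `z d/dz`. -/
def zDeriv : Loop →+ Loop :=
  (AddMonoidHom.mulLeft (HahnSeries.single 1 1)).comp
    (LaurentSeries.derivative ℂ[X] (V := ℂ[X])).toAddMonoidHom

lemma zDeriv_apply (x : Loop) :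
    zDeriv x = HahnSeries.single 1 1 * LaurentSeries.derivative ℂ[X] x := rfl

lemma coeff_zDeriv (x : Loop) (n : ℤ) : (zDeriv x).coeff n = n • x.coeff n := by
  rw [zDeriv_apply, HahnSeries.coeff_single_mul, one_mul, LaurentSeries.derivative_apply,
    LaurentSeries.hasseDeriv_coeff]
  simp

lemma zDeriv_loopT_mul (x : Loop) : zDeriv (loopT * x) = loopT * zDeriv x := by
  ext1
  funext n
  rw [loopT, HahnSeries.C_mul_eq_smul, HahnSeries.C_mul_eq_smul, coeff_zDeriv,
    HahnSeries.coeff_smul, HahnSeries.coeff_smul, coeff_zDeriv, smul_comm]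

lemma lsBdd_iff {a : LS} : lsBdd a ↔ ∃ x : Loop, x.coeff = a := by
  constructor
  · rintro ⟨N, hN⟩
    refine ⟨HahnSeries.ofSuppBddBelow a ⟨N, fun k hk ↦ ?_⟩, HahnSeries.coeff_ofSuppBddBelow⟩
    exact not_lt.mp fun hkN ↦ hk (hN k hkN)
  · rintro ⟨x, rfl⟩
    exact ⟨x.order, fun _ hk ↦ HahnSeries.coeff_eq_zero_of_lt_order hk⟩

lemma lsOne_eq_coeff : lsOne = (1 : Loop).coeff := by
  funext k
  simp [lsOne, HahnSeries.coeff_one]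

lemma zShift_lsDer_coeff (x : Loop) : zShift (lsDer x.coeff) = (zDeriv x).coeff := by
  funext n
  simp [zShift, lsDer, coeff_zDeriv]

lemma lsMul_coeff (x y : Loop) : lsMul x.coeff y.coeff = (x * y).coeff := by
  funext n
  rw [HahnSeries.coeff_mul, lsMul]
  have hinj : Set.InjOn Prod.fst
      (Finset.antidiagonal x.isPWO_support y.isPWO_support n : Set (ℤ × ℤ)) := by
    intro p hp q hq hpq
    simp only [Finset.mem_coe, Finset.mem_antidiagonal] at hp hq
    exact Prod.ext hpq (by lia)
  rw [finsum_eq_sum_of_support_subset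
    (s := (Finset.antidiagonal x.isPWO_support y.isPWO_support n).image Prod.fst)]
  · rw [Finset.sum_image hinj]
    refine Finset.sum_congr rfl fun p hp ↦ ?_
    rw [← (Finset.mem_antidiagonal.mp hp).2.2, add_sub_cancel_left]
  · intro k hk
    rw [Finset.coe_image]
    refine ⟨(k, n - k), ?_, rfl⟩
    rw [Finset.mem_coe, Finset.mem_antidiagonal]
    exact ⟨left_ne_zero_of_mul hk, right_ne_zero_of_mul hk, add_sub_cancel k n⟩

lemma lsMul_lsOne (a : LS) : lsMul a lsOne = a := by
  funext n
  rw [lsMul, finsum_eq_single _ n]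
  · simp [lsOne]
  · intro k hk
    simp [lsOne, sub_ne_zero.mpr hk.symm]

lemma lsOne_lsMul (a : LS) : lsMul lsOne a = a := by
  funext n
  rw [lsMul, finsum_eq_single _ 0]
  · simp [lsOne]
  · intro k hk
    simp [lsOne, hk]

lemma lsMul_zero (a : LS) : lsMul a 0 = 0 := by
  funext n
  simp [lsMul]

lemma zero_lsMul (a : LS) : lsMul 0 a = 0 := by
  funext n
  simp [lsMul]

lemma hahnSeries_C_dvd_iff {R : Type*} [CommRing R] {r : R} {x : LaurentSeries R} :
    HahnSeries.C r ∣ x ↔ ∀ n, r ∣ x.coeff n := by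
  classical
  constructor
  · rintro ⟨y, rfl⟩ n
    rw [HahnSeries.C_mul_eq_smul, HahnSeries.coeff_smul]
    exact dvd_mul_right _ _
  · intro h
    choose q hq using h
    let y : LaurentSeries R := ⟨fun n ↦ if x.coeff n = 0 then 0 else q n,
      x.isPWO_support.mono fun n hn hx ↦ hn (if_pos hx)⟩
    refine ⟨y, ?_⟩
    ext1
    funext n
    by_cases hx : x.coeff n = 0
    · simp [y, hx]
    · simpa [HahnSeries.C_mul_eq_smul, y, hx] using hq n

lemma loopT_sub_natCast_dvd_iff {l : ℕ} {x : Loop} :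
    loopT - (l : Loop) ∣ x ↔ ∀ n, (x.coeff n).eval (l : ℂ) = 0 := by
  have hC : loopT - (l : Loop) = HahnSeries.C (X - C (l : ℂ)) := by
    rw [map_sub, map_natCast, map_natCast, loopT]
  simp only [hC, hahnSeries_C_dvd_iff, dvd_iff_isRoot, IsRoot]

lemma eq_zero_of_eventually_loopT_sub_natCast_dvd (x : Loop)
    (h : ∀ᶠ l : ℕ in atTop, loopT - (l : Loop) ∣ x) : x = 0 := by
  ext1
  funext n
  obtain ⟨N, hN⟩ := eventually_atTop.mp h
  refine eq_zero_of_infinite_isRoot _ <|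
    ((Set.Ici_infinite N).image Nat.cast_injective.injOn).mono ?_
  rintro _ ⟨l, hl, rfl⟩
  exact loopT_sub_natCast_dvd_iff.mp (hN l hl) n

lemma coeff_mul_natCast_pow (x : Loop) (i k : ℕ) (z : ℤ) :
    (x * (i : Loop) ^ k).coeff z = (i : ℂ) ^ k • x.coeff z := by
  rw [← Nat.cast_pow, ← Nat.cast_pow, mul_comm, ← nsmul_eq_mul, HahnSeries.coeff_smul,
    Nat.cast_smul_eq_nsmul]

lemma exists_coeff_eq_of_mem_polynomialFrom {M : ℕ} {a : ℕ → Loop} (ha : a ∈ polynomialFrom M) :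
    ∃ m, ∃ c : ℕ → LS, ∀ i ≥ M,
      (a i).coeff = fun z ↦ ∑ k ∈ Finset.range m, ((i : ℂ) ^ k) • c k z := by
  obtain ⟨P, hP⟩ := ha
  refine ⟨P.natDegree + 1, fun k ↦ (P.coeff k).coeff, fun i hi ↦ ?_⟩
  funext z
  rw [hP i hi, eval_eq_sum_range, HahnSeries.coeff_sum]
  exact Finset.sum_congr rfl fun k _ ↦ coeff_mul_natCast_pow _ _ _ _

/-- The `c k` need not be Laurent series, so they do not provide the interpolating polynomial;
the iterated differences do. -/
lemma mem_polynomialFrom_of_coeff_eq {M m : ℕ} {a : ℕ → Loop} {c : ℕ → LS}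
    (h : ∀ i ≥ M, (a i).coeff = fun z ↦ ∑ k ∈ Finset.range m, ((i : ℂ) ^ k) • c k z) :
    a ∈ polynomialFrom M := by
  refine mem_polynomialFrom_of_fwdDiff_iter_eq_zero (m := m) fun i hi ↦ ?_
  ext1
  funext z
  have hpoly : ∀ j ≥ M, (a j).coeff z =
      ∑ k ∈ Finset.range m, c k z * (j : ℂ[X]) ^ k := by
    intro j hj
    rw [h j hj]
    refine Finset.sum_congr rfl fun k _ ↦ ?_
    rw [smul_eq_C_mul, map_pow, map_natCast, mul_comm]
  calc ((Δ_[1])^[m] a i).coeff z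
      = (Δ_[1])^[m] (fun j ↦ (a j).coeff z) i :=
        (fwdDiff_iter_map (HahnSeries.coeff.addMonoidHom z) a m i).symm
    _ = (Δ_[1])^[m] (fun j : ℕ ↦ ∑ k ∈ Finset.range m, c k z * (j : ℂ[X]) ^ k) i :=
        fwdDiff_iter_congr_of_ge hpoly m hi
    _ = (Δ_[1])^[m] (fun x : ℂ[X] ↦ ∑ k ∈ Finset.range m, c k z * x ^ k) i :=
        fwdDiff_iter_comp_natCast (fun x : ℂ[X] ↦ ∑ k ∈ Finset.range m, c k z * x ^ k) m i
    _ = 0 := congrFun (fwdDiff_iter_sum_mul_pow_eq_zero fun k ↦ c k z) _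

end LaurentSeries

section LoopMatrices

variable {D E : ℕ → ℕ → Loop} {r : ℕ → Loop}

/-- The upper triangular matrix whose `n`-th superdiagonal is the sequence `D n`. -/
def upperMatrix (D : ℕ → ℕ → Loop) (i j : ℕ) : LS :=
  if i ≤ j then (D (j - i) i).coeff else 0

/-- The Frobenius matrix with first row `r`. -/
def frobeniusMatrix (r : ℕ → Loop) : ℕ → ℕ → LS
  | 0, j => (r j).coeff
  | i + 1, j => if i = j then lsOne else 0

lemma upperMatrix_add (n i : ℕ) : upperMatrix D i (i + n) = (D n i).coeff := by
  rw [upperMatrix, if_pos (Nat.le_add_right i n), Nat.add_sub_cancel_left]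

lemma upperMatrix_of_lt {i j : ℕ} (h : j < i) : upperMatrix D i j = 0 :=
  if_neg (not_le.mpr h)

lemma upperMatrix_self (hD : D 0 = 1) (i : ℕ) : upperMatrix D i i = lsOne := by
  have h := upperMatrix_add (D := D) 0 i
  rwa [hD, Pi.one_apply, ← lsOne_eq_coeff] at h

lemma eq_upperMatrix {U : ℕ → ℕ → LS} (hU : ∀ i j, j < i → U i j = 0)
    (hD : ∀ n i, (D n i).coeff = U i (i + n)) : U = upperMatrix D := by
  funext i j
  rcases lt_or_ge j i with hij | hij
  · rw [hU i j hij, upperMatrix_of_lt hij]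
  · obtain ⟨n, rfl⟩ := Nat.exists_eq_add_of_le hij
    rw [upperMatrix_add, hD]

lemma isFrob_iff {B : ℕ → ℕ → LS} : IsFrob B ↔ ∃ r, B = frobeniusMatrix r := by
  constructor
  · rintro ⟨hrow, hsub, hzero⟩
    choose r hr using fun j ↦ lsBdd_iff.mp (hrow j)
    refine ⟨r, funext₂ fun i j ↦ ?_⟩
    match i with
    | 0 => exact (hr j).symm
    | i + 1 =>
      rcases eq_or_ne i j with rfl | hij
      · simp [frobeniusMatrix, hsub]
      · simp [frobeniusMatrix, hij, hzero (i + 1) j i.succ_pos (by lia)]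
  · rintro ⟨r, rfl⟩
    refine ⟨fun j ↦ lsBdd_iff.mpr ⟨r j, rfl⟩, fun j ↦ if_pos rfl, fun i j hi hij ↦ ?_⟩
    obtain ⟨i, rfl⟩ := Nat.exists_eq_add_one.mpr hi
    exact if_neg (by lia)

lemma GLmat.exists_eq_upperMatrix {A U : ℕ → ℕ → LS} (hA : GLmat A)
    (hU : ∀ i j, j < i → U i j = 0) (hAU : ∀ i j, i ≤ j → A i j = U i j) :
    ∃ D, U = upperMatrix D ∧ ∃ M, ∀ n, D n ∈ glDiagonal loopT M n := by
  obtain ⟨hbdd, -, rows, hpoly, -, hint⟩ := hA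
  choose D hD using fun n i ↦ lsBdd_iff.mp (hbdd i (i + n))
  obtain ⟨M, hM⟩ : ∃ M, ∀ i ≥ M, i ∉ rows :=
    ⟨rows.sup id + 1, fun i hi hrow ↦ absurd (Finset.le_sup (f := id) hrow) (by simpa using hi)⟩
  refine ⟨D, eq_upperMatrix hU fun n i ↦ ?_, M, fun n ↦ ⟨?_, fun i hi l hl ↦ ?_⟩⟩
  · rw [hD, hAU i (i + n) (Nat.le_add_right i n)]
  · obtain ⟨m, c, hc⟩ := hpoly n
    exact mem_polynomialFrom_of_coeff_eq fun i hi ↦ (hD n i).trans (hc i (hM i hi))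
  · rw [loopT_sub_natCast_dvd_iff, hD]
    exact hint i (hM i hi) l (Nat.zero_lt_of_lt hl.1) (i + n) hl.1 hl.2

lemma GLmat_upperMatrix {M : ℕ} (hD : ∀ n, D n ∈ glDiagonal loopT M n) :
    GLmat (upperMatrix D) := by
  have hM {i : ℕ} (hi : i ∉ Finset.range M) : M ≤ i := by simpa using hi
  refine ⟨fun i j ↦ ?_, ⟨0, fun i j hij ↦ upperMatrix_of_lt hij⟩, Finset.range M,
    fun n ↦ ?_, fun n ↦ ?_, fun i hi l _ j hil hlj z ↦ ?_⟩
  · rw [upperMatrix]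
    split_ifs
    · exact lsBdd_iff.mpr ⟨_, rfl⟩
    · exact ⟨0, fun _ _ ↦ rfl⟩
  · obtain ⟨m, c, hc⟩ := exists_coeff_eq_of_mem_polynomialFrom (hD n).1
    exact ⟨m, c, fun i hi ↦ (upperMatrix_add n i).trans (hc i (hM hi))⟩
  · cases n with
    | zero =>
      obtain ⟨m, c, hc⟩ := exists_coeff_eq_of_mem_polynomialFrom (hD 0).1
      exact ⟨m, c, fun i hi ↦ (upperMatrix_add 0 i).trans (hc i (hM hi))⟩
    | succ n =>
      refine ⟨0, fun _ ↦ 0, fun i _ ↦ ?_⟩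
      rw [upperMatrix_of_lt (by lia)]
      rfl
  · obtain ⟨n, rfl⟩ := Nat.exists_eq_add_of_le (hil.le.trans hlj)
    rw [upperMatrix_add]
    exact loopT_sub_natCast_dvd_iff.mp ((hD n).2 i (hM hi) l ⟨hil, hlj⟩) z

lemma isUnipUT_iff {U : ℕ → ℕ → LS} :
    IsUnipUT U ↔ ∃ D, U = upperMatrix D ∧ D 0 = 1 ∧ ∃ M, ∀ n, D n ∈ glDiagonal loopT M n := by
  constructor
  · rintro ⟨hdiag, hlow, hgl⟩
    obtain ⟨D, rfl, hD⟩ := hgl.exists_eq_upperMatrix hlow fun _ _ _ ↦ rfl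
    refine ⟨D, rfl, funext fun i ↦ HahnSeries.coeff_injective ?_, hD⟩
    rw [← upperMatrix_add, Pi.one_apply, ← lsOne_eq_coeff]
    exact hdiag i
  · rintro ⟨D, rfl, hone, M, hD⟩
    exact ⟨upperMatrix_self hone, fun i j hij ↦ upperMatrix_of_lt hij, GLmat_upperMatrix hD⟩

lemma matMul_fSh_add (U : ℕ → ℕ → LS) {V : ℕ → ℕ → LS} (hV : ∀ i j, j < i → V i j = 0)
    (i j : ℕ) :
    matMul U (fun i' j' ↦ fSh i' j' + V i' j') i j =
      U i (j + 1) + ∑ k ∈ Finset.range (j + 1), lsMul (U i k) (V k j) := by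
  rw [matMul, finsum_eq_sum_of_support_subset (s := Finset.range (j + 2))]
  · rw [Finset.sum_range_succ, add_comm, fSh, if_pos rfl, hV _ _ j.lt_succ_self, add_zero,
      lsMul_lsOne]
    congr 1
    refine Finset.sum_congr rfl fun k hk ↦ ?_
    rw [fSh, if_neg (Finset.mem_range.mp hk).ne, zero_add]
  · intro k hk
    by_contra hkj
    have hlt : j + 1 < k := not_le.mp fun hle ↦
      hkj (Finset.mem_coe.mpr (Finset.mem_range_succ_iff.mpr hle))
    refine hk ?_
    simp only [fSh, if_neg hlt.ne', hV k j (by lia), add_zero, lsMul_zero]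

lemma sum_lsMul_upperMatrix (n i : ℕ) :
    ∑ k ∈ Finset.range (i + n + 1), lsMul (upperMatrix D i k) (upperMatrix E k (i + n)) =
      (∑ m : Fin (n + 1), D m i * E (n - m) (i + m)).coeff := by
  have hlow : ∀ k ∈ Finset.range i,
      lsMul (upperMatrix D i k) (upperMatrix E k (i + n)) = 0 := fun k hk ↦ by
    rw [upperMatrix_of_lt (Finset.mem_range.mp hk), zero_lsMul]
  rw [add_assoc, Finset.sum_range_add, Finset.sum_eq_zero hlow, zero_add, Finset.sum_range]
  funext z
  rw [HahnSeries.coeff_sum, Finset.sum_apply]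
  refine Finset.sum_congr rfl fun m _ ↦ ?_
  have hE := upperMatrix_add (D := E) (n - m) (i + m)
  rw [add_assoc, Nat.add_sub_cancel' m.is_le] at hE
  rw [upperMatrix_add, hE, lsMul_coeff]

lemma matMul_frobeniusMatrix_succ (U : ℕ → ℕ → LS) (i j : ℕ) :
    matMul (frobeniusMatrix r) U (i + 1) j = U i j := by
  rw [matMul, finsum_eq_single _ i]
  · rw [frobeniusMatrix, if_pos rfl, lsOne_lsMul]
  · intro k hk
    rw [frobeniusMatrix, if_neg hk.symm, zero_lsMul]

lemma matMul_frobeniusMatrix_zero (j : ℕ) :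
    matMul (frobeniusMatrix r) (upperMatrix D) 0 j =
      (∑ k ∈ Finset.range (j + 1), r k * D (j - k) k).coeff := by
  rw [matMul, finsum_eq_sum_of_support_subset (s := Finset.range (j + 1))]
  · funext z
    rw [HahnSeries.coeff_sum, Finset.sum_apply]
    refine Finset.sum_congr rfl fun k hk ↦ ?_
    rw [frobeniusMatrix, upperMatrix, if_pos (by simpa [Nat.lt_succ_iff] using hk), lsMul_coeff]
  · intro k hk
    by_contra hkj
    refine hk ?_
    change lsMul _ _ = 0
    rw [upperMatrix_of_lt (by simpa using hkj), lsMul_zero]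

lemma gauge_entry_upper (n i : ℕ) :
    -zShift (lsDer (upperMatrix D i (i + n))) +
        matMul (upperMatrix D) (fun i' j' ↦ fSh i' j' + upperMatrix E i' j') i (i + n) =
      (D (n + 1) i + gaugeDiagonal zDeriv E n (fun m ↦ D m) i).coeff := by
  rw [matMul_fSh_add _ fun _ _ ↦ upperMatrix_of_lt, sum_lsMul_upperMatrix, upperMatrix_add,
    add_assoc i n 1, upperMatrix_add, zShift_lsDer_coeff, gaugeDiagonal, Fin.val_last]
  simp only [HahnSeries.coeff_add', HahnSeries.coeff_sub']
  abel

lemma gauge_entry_lower {i j : ℕ} (hij : j < i) :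
    -zShift (lsDer (upperMatrix D i j)) +
        matMul (upperMatrix D) (fun i' j' ↦ fSh i' j' + upperMatrix E i' j') i j =
      upperMatrix D i (j + 1) := by
  have hder : zShift (lsDer (0 : LS)) = 0 := funext fun n ↦ smul_zero _
  rw [matMul_fSh_add _ fun _ _ ↦ upperMatrix_of_lt, upperMatrix_of_lt hij, hder, neg_zero, zero_add,
    Finset.sum_eq_zero, add_zero]
  intro k hk
  rw [upperMatrix_of_lt ((Nat.lt_succ_iff.mp (Finset.mem_range.mp hk)).trans_lt hij), zero_lsMul]

lemma gauge_equation_iff (hD : D 0 = 1) :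
    (∀ i j : ℕ, ∀ n : ℤ, -(zShift (lsDer (upperMatrix D i j)) n) +
        matMul (upperMatrix D) (fun i' j' ↦ fSh i' j' + upperMatrix E i' j') i j n =
      matMul (frobeniusMatrix r) (upperMatrix D) i j n) ↔
    IsGaugeSolution zDeriv E D ∧ ∀ j, ∑ k ∈ Finset.range (j + 1), r k * D (j - k) k =
      D (j + 1) 0 + gaugeDiagonal zDeriv E j (fun m ↦ D m) 0 := by
  let Z := fun i j ↦ -zShift (lsDer (upperMatrix D i j)) +
        matMul (upperMatrix D) (fun i' j' ↦ fSh i' j' + upperMatrix E i' j') i j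
  change (∀ i j : ℕ, ∀ n : ℤ, Z i j n = _) ↔ _
  have firstRow (j : ℕ) : Z 0 j = matMul (frobeniusMatrix r) (upperMatrix D) 0 j ↔
      ∑ k ∈ Finset.range (j + 1), r k * D (j - k) k =
        D (j + 1) 0 + gaugeDiagonal zDeriv E j (fun m ↦ D m) 0 := by
    have hZ := gauge_entry_upper (D := D) (E := E) j 0
    rw [zero_add] at hZ
    rw [matMul_frobeniusMatrix_zero, show Z 0 j = _ from hZ, HahnSeries.coeff_inj, eq_comm]
  have laterRow (n i : ℕ) : Z (i + 1) (i + 1 + n) = upperMatrix D i (i + 1 + n) ↔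
      D (n + 1) i = D (n + 1) (i + 1) + gaugeDiagonal zDeriv E n (fun m ↦ D m) (i + 1) := by
    rw [show Z (i + 1) (i + 1 + n) = _ from gauge_entry_upper n (i + 1), add_assoc i 1 n,
      add_comm 1 n, upperMatrix_add, HahnSeries.coeff_inj, eq_comm]
  have lowerEntry {i j : ℕ} (hij : j ≤ i) : Z (i + 1) j = upperMatrix D i j := by
    rw [show Z (i + 1) j = _ from gauge_entry_lower (Nat.lt_succ_of_le hij)]
    rcases hij.eq_or_lt with rfl | hlt
    · rw [upperMatrix_self hD, upperMatrix_self hD]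
    · rw [upperMatrix_of_lt hlt, upperMatrix_of_lt (Nat.succ_lt_succ hlt)]
  constructor
  · intro h
    refine ⟨⟨hD, fun n i ↦ (laterRow n i).mp ?_⟩, fun j ↦ (firstRow j).mp (funext (h 0 j))⟩
    rw [← matMul_frobeniusMatrix_succ (r := r) (upperMatrix D) i]
    exact funext (h (i + 1) (i + 1 + n))
  · rintro ⟨hsol, hrow⟩ i j n
    cases i with
    | zero => exact congrFun ((firstRow j).mpr (hrow j)) n
    | succ i =>
      rw [matMul_frobeniusMatrix_succ]
      rcases le_or_gt j i with hij | hij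
      · rw [lowerEntry hij]
      · obtain ⟨m, rfl⟩ := Nat.exists_eq_add_of_le (Nat.succ_le_of_lt hij)
        exact congrFun ((laterRow m i).mpr (hsol.2 m i)) n

end LoopMatrices

theorem frobenius_canonical_form_general
    (b : ℕ → ℕ → LS) (hb : ∀ i j : ℕ, j < i → b i j = 0)
    (hA : GLmat fun i j => fSh i j + b i j) :
    ∃! P : (ℕ → ℕ → LS) × (ℕ → ℕ → LS),
      IsUnipUT P.1 ∧ IsFrob P.2 ∧
      ∀ i j : ℕ, ∀ n : ℤ,
        -(zShift (lsDer (P.1 i j)) n) + matMul P.1 (fun i' j' => fSh i' j' + b i' j') i j n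
          = matMul P.2 P.1 i j n := by
  have hAb (i j : ℕ) (hij : i ≤ j) : fSh i j + b i j = b i j := by
    rw [fSh, if_neg (by lia), zero_add]
  obtain ⟨E, rfl, M, hE⟩ := hA.exists_eq_upperMatrix hb hAb
  obtain ⟨D, ⟨hD, hDM⟩, hDuniq⟩ := existsUnique_isGaugeSolution
    eq_zero_of_eventually_loopT_sub_natCast_dvd zDeriv_loopT_mul hE
  obtain ⟨r, hr, hruniq⟩ := existsUnique_row_mul_unitriangular
    (U := fun k j ↦ D (j - k) k) (fun j ↦ by simp [hD.1])
    (fun j ↦ D (j + 1) 0 + gaugeDiagonal zDeriv E j (fun m ↦ D m) 0)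
  refine ⟨(upperMatrix D, frobeniusMatrix r), ⟨isUnipUT_iff.mpr ⟨D, rfl, hD.1, hDM⟩,
    isFrob_iff.mpr ⟨r, rfl⟩, (gauge_equation_iff hD.1).mpr ⟨hD, hr⟩⟩, ?_⟩
  rintro ⟨Y, B⟩ ⟨hY, hB, hgauge⟩
  obtain ⟨D', rfl, hD'one, hD'M⟩ := isUnipUT_iff.mp hY
  obtain ⟨r', rfl⟩ := isFrob_iff.mp hB
  obtain ⟨hD', hr'⟩ := (gauge_equation_iff hD'one).mp hgauge
  obtain rfl := hDuniq D' ⟨hD', hD'M⟩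
  rw [hruniq r' hr']

/-- for irrational `g(t)`, every `A = f + b ∈ p_{g(t)}⁻¹(f)` (with `b` upper
triangular, `A` in `gl`) admits a unique pair `(X, B)` with `X ∈ N(z)` and `B` Frobenius
such that `-zX' + XA = BX`. -/
theorem frobenius_canonical_form (g : ℕ → ℂ) (hg : ¬ RationalTail g)
    (b : ℕ → ℕ → LS) (hb : ∀ i j : ℕ, j < i → b i j = 0)
    (hA : GLmat fun i j => fSh i j + b i j) :
    ∃! P : (ℕ → ℕ → LS) × (ℕ → ℕ → LS),
      IsUnipUT P.1 ∧ IsFrob P.2 ∧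
      ∀ i j : ℕ, ∀ n : ℤ,
        -(zShift (lsDer (P.1 i j)) n) + matMul P.1 (fun i' j' => fSh i' j' + b i' j') i j n
          = matMul P.2 P.1 i j n :=
  frobenius_canonical_form_general b hb hA
end
end

section
/- For the Gelfand–Dickey Hamiltonian map V_X(L) = (LX)₊L - L(XL)₊ on pseudodifferential symbols: if L is a monic purely differential operator of order n (L = L₊) and X = Q∘D^{-n} with Q a differential operator, then V_X(L) is a differential operator of order at most n-1. Hence the set of monic differential operators of order n is invariant under all such Hamiltonian vector fields. -/
noncomputable section

/-- Generalized binomial coefficient `binom(m, l)` for integer `m`. -/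
def qbinom (m : ℤ) (l : ℕ) : ℚ :=
  (∏ i ∈ Finset.range l, ((m : ℚ) - (i : ℚ))) / (Nat.factorial l : ℚ)

/-- Finite order condition for a symbol `Σ_{k ≤ N} p_k Dᵏ`. -/
def OrderBdd {R : Type*} [Zero R] (A : ℤ → R) : Prop := ∃ N : ℤ, ∀ k : ℤ, N < k → A k = 0

/-- Product of pseudodifferential symbols via `Dᵐ ∘ u = Σ binom(m,l) u^{(l)} D^{m-l}`. -/
def pdMul {R : Type*} [CommRing R] [Algebra ℚ R] (d : R → R) (A B : ℤ → R) : ℤ → R :=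
  fun m => ∑ᶠ p : ℤ × ℕ, qbinom p.1 p.2 • (A p.1 * d^[p.2] (B (m - p.1 + (p.2 : ℤ))))

/-- The differential part `S₊` of a symbol: keep the terms with nonnegative powers of `D`. -/
def pdPlus {R : Type*} [Zero R] (A : ℤ → R) : ℤ → R := fun k => if 0 ≤ k then A k else 0

/-- The symbol `Dᵐ`. -/
def pdPow {R : Type*} [Zero R] [One R] (m : ℤ) : ℤ → R := fun k => if k = m then 1 else 0

/-!
A product of two differential operators is a differential operator, which settles the negative
powers of `D`. For the powers `Dᵏ` with `k ≥ n`, replacing `(LX)₊` by `LX` and `(XL)₊` by `XL`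
only changes terms of order at most `n - 1`, since `S₋` has order at most `-1` and `L` has order
at most `n`; what remains is `(LX)L - L(XL) = 0`. The substance is thus the associativity of the
product of symbols. Comparing the coefficients of `a D^i ∘ b D^j ∘ c D^p`, it follows from the
iterated Leibniz rule together with the Chu–Vandermonde identity.
-/

section

open Finset

theorem qbinom_eq_choose (m : ℤ) (l : ℕ) : qbinom m l = Ring.choose (m : ℚ) l := by
  rw [qbinom, ← descPochhammer_eval_eq_prod_range, Ring.choose_eq_smul,
    ← Polynomial.aeval_eq_smeval, ← descPochhammer_map (algebraMap ℤ ℚ),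
    Polynomial.eval_map_algebraMap, smul_eq_mul, div_eq_inv_mul]

theorem qbinom_add_mul_choose (i : ℤ) (r t : ℕ) :
    qbinom i (r + t) * ((r + t).choose r : ℚ) = qbinom i r * qbinom (i - r) t := by
  simpa [qbinom_eq_choose, mul_comm] using
    Ring.choose_smul_choose (i : ℚ) (Nat.le_add_right r t)

theorem qbinom_add_eq_sum_antidiagonal (i j : ℤ) (s : ℕ) :
    qbinom (i + j) s = ∑ p ∈ antidiagonal s, qbinom i p.1 * qbinom j p.2 := by
  simpa [qbinom_eq_choose] using Ring.add_choose_eq s (Commute.all (i : ℚ) (j : ℚ))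

theorem qbinom_eq_zero_of_lt {i : ℤ} {l : ℕ} (hi : 0 ≤ i) (hil : i < l) : qbinom i l = 0 := by
  lift i to ℕ using hi
  rw [qbinom_eq_choose, Int.cast_natCast, Ring.choose_natCast,
    Nat.choose_eq_zero_of_lt (by exact_mod_cast hil), Nat.cast_zero]

section Sums

variable {M : Type*} [AddCommMonoid M]

theorem sum_antidiagonal_assoc {A : Type*} [AddCommMonoid A] [HasAntidiagonal A]
    (f : A → A → A → M) (n : A) :
    ∑ p ∈ antidiagonal n, ∑ q ∈ antidiagonal p.1, f q.1 q.2 p.2 =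
      ∑ p ∈ antidiagonal n, ∑ q ∈ antidiagonal p.2, f p.1 q.1 q.2 := by
  simp only [sum_sigma']
  apply sum_nbij' (fun ⟨⟨_, k⟩, ⟨i, j⟩⟩ ↦ ⟨(i, j + k), (j, k)⟩)
    (fun ⟨⟨i, _⟩, ⟨j, k⟩⟩ ↦ ⟨(i + j, k), (i, j)⟩) <;>
    simp +contextual only [mem_sigma, HasAntidiagonal.mem_antidiagonal] <;> grind

theorem sum_range_sum_range_eq_sum_antidiagonal {N : ℕ} {f : ℕ → ℕ → M}
    (hf : ∀ r s, N ≤ r + s → f r s = 0) :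
    ∑ r ∈ range N, ∑ s ∈ range N, f r s =
      ∑ m ∈ range N, ∑ p ∈ antidiagonal m, f p.1 p.2 := by
  simp only [Nat.sum_antidiagonal_eq_sum_range_succ f, Nat.succ_eq_add_one, sum_range_diag_flip]
  refine sum_congr rfl fun r _ ↦ (sum_subset (range_subset_range.2 (Nat.sub_le N r)) ?_).symm
  intro s _ hs
  rw [mem_range, not_lt] at hs
  exact hf r s (by omega)

theorem sum_comp_add_right_eq_sum {G : Type*} [AddGroup G] {s t : Finset G} {f : G → M} {c : G}
    (hs : ∀ x, f x ≠ 0 → x - c ∈ s) (ht : ∀ x, f x ≠ 0 → x ∈ t) :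
    ∑ x ∈ s, f (x + c) = ∑ x ∈ t, f x := by
  rw [← finsum_eq_sum_of_support_subset f ht, ← finsum_comp_equiv (Equiv.addRight c)]
  refine (finsum_eq_sum_of_support_subset _ fun x hx ↦ ?_).symm
  simpa using hs (x + c) hx

end Sums

section Derivation

section Iterate

variable {S R : Type*} [CommSemiring S] [CommSemiring R] [Algebra S R] (d : Derivation S R R)

theorem iterate_derivation_sum_smul {ι : Type*} (m : ℕ) (s : Finset ι) (q : ι → S)
    (f : ι → R) :
    d^[m] (∑ i ∈ s, q i • f i) = ∑ i ∈ s, q i • d^[m] (f i) := by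
  have hpow : d^[m] = ((d : R →ₗ[S] R) ^ m : Module.End S R) := (Module.End.coe_pow _ m).symm
  simp only [hpow, map_sum, map_smul]

theorem iterate_derivation_mul (m : ℕ) (x y : R) :
    d^[m] (x * y) =
      ∑ p ∈ antidiagonal m, m.choose p.1 • (d^[p.1] x * d^[p.2] y) := by
  induction m with
  | zero => simp
  | succ m ih =>
    rw [sum_antidiagonal_choose_succ_nsmul (fun i j ↦ d^[i] x * d^[j] y) m,
      Function.iterate_succ_apply', ih, map_sum, ← sum_add_distrib]
    refine sum_congr rfl fun p hp ↦ ?_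
    rw [Nat.choose_symm_of_eq_add (mem_antidiagonal.1 hp).symm]
    simp only [map_nsmul, Derivation.leibniz, Function.iterate_succ_apply', smul_eq_mul,
      ← smul_add]
    ring

end Iterate

variable {R : Type*} [CommRing R] [Algebra ℚ R] (d : Derivation ℚ R R)

/-- Equality of the coefficients of `D^(i+j-n)` in `D^i ∘ (b D^j ∘ c)` and `(D^i ∘ b D^j) ∘ c`. -/
theorem sum_antidiagonal_qbinom_smul_iterate (i j : ℤ) (b c : R) (n : ℕ) :
    ∑ p ∈ antidiagonal n, (qbinom i p.1 * qbinom j p.2) • d^[p.1] (b * d^[p.2] c) =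
      ∑ p ∈ antidiagonal n,
        (qbinom i p.1 * qbinom (i + j - p.1) p.2) • (d^[p.1] b * d^[p.2] c) := by
  calc
    _ = ∑ p ∈ antidiagonal n, ∑ q ∈ antidiagonal p.1,
          (qbinom i q.1 * qbinom (i - q.1) q.2 * qbinom j p.2) •
            (d^[q.1] b * d^[q.2 + p.2] c) := by
      refine sum_congr rfl fun p _ ↦ ?_
      rw [iterate_derivation_mul, smul_sum]
      refine sum_congr rfl fun q hq ↦ ?_
      rw [← Function.iterate_add_apply, ← qbinom_add_mul_choose, mem_antidiagonal.1 hq,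
        ← Nat.cast_smul_eq_nsmul ℚ, smul_smul, mul_right_comm]
    _ = ∑ p ∈ antidiagonal n, ∑ q ∈ antidiagonal p.2,
          (qbinom i p.1 * qbinom (i - p.1) q.1 * qbinom j q.2) •
            (d^[p.1] b * d^[q.1 + q.2] c) :=
      sum_antidiagonal_assoc (fun r t l ↦
        (qbinom i r * qbinom (i - r) t * qbinom j l) • (d^[r] b * d^[t + l] c)) n
    _ = _ := by
      refine sum_congr rfl fun p _ ↦ ?_
      rw [add_sub_right_comm, qbinom_add_eq_sum_antidiagonal, mul_sum, sum_smul]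
      refine sum_congr rfl fun q hq ↦ ?_
      rw [mem_antidiagonal.1 hq, mul_assoc]

theorem sum_range_qbinom_smul_iterate (i j : ℤ) (b : R) {c : ℕ → R} {N : ℕ}
    (hc : ∀ m, N ≤ m → c m = 0) :
    ∑ m ∈ range N, ∑ l ∈ range N, (qbinom i m * qbinom j l) • d^[m] (b * d^[l] (c (m + l))) =
      ∑ r ∈ range N, ∑ s ∈ range N,
        (qbinom i r * qbinom (i + j - r) s) • (d^[r] b * d^[s] (c (r + s))) := by
  rw [sum_range_sum_range_eq_sum_antidiagonal fun m l h ↦ by simp [hc _ h],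
    sum_range_sum_range_eq_sum_antidiagonal fun r s h ↦ by simp [hc _ h]]
  refine sum_congr rfl fun n _ ↦ ?_
  convert sum_antidiagonal_qbinom_smul_iterate d i j b (c n) n using 4 with p hp p hp
  all_goals simp only [mem_antidiagonal.1 hp]

end Derivation

section Order

variable {R : Type*}

/-- The symbol `A` has order at most `N`, so that `OrderBdd A` says that some `N` works. -/
def OrderLE [Zero R] (A : ℤ → R) (N : ℤ) : Prop := ∀ k : ℤ, N < k → A k = 0

/-- The symbol `A` has no negative powers of `D`. Together with `OrderBdd A` this says that `A` is
a differential operator. -/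
def IsDifferential [Zero R] (A : ℤ → R) : Prop := ∀ k : ℤ, k < 0 → A k = 0

theorem isDifferential_pdPlus [Zero R] (A : ℤ → R) : IsDifferential (pdPlus A) :=
  fun _ hk ↦ if_neg hk.not_ge

theorem orderLE_pdPow [Zero R] [One R] (m : ℤ) : OrderLE (pdPow m : ℤ → R) m :=
  fun _ hk ↦ if_neg hk.ne'

variable [CommRing R] [Algebra ℚ R] {d : Derivation ℚ R R} {A B C : ℤ → R} {a b c : ℤ}

theorem OrderLE.pdMul (hA : OrderLE A a) (hB : OrderLE B b) :
    OrderLE (pdMul d A B) (a + b) := by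
  refine fun m hm ↦ finsum_eq_zero_of_forall_eq_zero fun ⟨i, l⟩ ↦ ?_
  by_cases hi : a < i
  · simp [hA i hi]
  · simp [hB (m - i + l) (by omega)]

theorem OrderBdd.pdMul (hA : OrderBdd A) (hB : OrderBdd B) : OrderBdd (pdMul d A B) :=
  let ⟨a, ha⟩ := hA
  let ⟨b, hb⟩ := hB
  ⟨a + b, OrderLE.pdMul ha hb⟩

theorem IsDifferential.pdMul (hA : IsDifferential A) (hB : IsDifferential B) :
    IsDifferential (pdMul d A B) := by
  refine fun m hm ↦ finsum_eq_zero_of_forall_eq_zero fun ⟨i, l⟩ ↦ ?_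
  rcases lt_or_ge i 0 with hi | hi
  · simp [hA i hi]
  rcases lt_or_ge i l with hil | hil
  · simp [qbinom_eq_zero_of_lt hi hil]
  · simp [hB (m - i + l) (by omega)]

theorem pdMul_pdPlus_left_apply (hB : OrderLE B b) {k : ℤ} (hk : b ≤ k) :
    pdMul d (pdPlus A) B k = pdMul d A B k := by
  refine finsum_congr fun ⟨i, l⟩ ↦ ?_
  rcases lt_or_ge i 0 with hi | hi
  · simp [hB (k - i + l) (by omega)]
  · simp [pdPlus, hi]

theorem pdMul_pdPlus_right_apply (hA : OrderLE A a) {k : ℤ} (hk : a ≤ k) :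
    pdMul d A (pdPlus B) k = pdMul d A B k := by
  refine finsum_congr fun ⟨i, l⟩ ↦ ?_
  rcases lt_or_ge a i with hi | hi
  · simp [hA i hi]
  · have : 0 ≤ k - i + l := by omega
    simp [pdPlus, this]

theorem pdMul_apply_eq_sum (hA : OrderLE A a) (hB : OrderLE B b) {m : ℤ} {s : Finset ℤ} {N : ℕ}
    (hs : Icc (m - b) a ⊆ s) (hN : a + b - m < N) :
    pdMul d A B m =
      ∑ i ∈ s, ∑ l ∈ range N, qbinom i l • (A i * d^[l] (B (m - i + l))) := by
  rw [← sum_product' s (range N) fun i l ↦ qbinom i l • (A i * d^[l] (B (m - i + l)))]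
  refine finsum_eq_sum_of_support_subset _ fun ⟨i, l⟩ hil ↦ ?_
  have hi : i ≤ a := by
    by_contra! hi
    simp [hA i hi] at hil
  have hl : m - i + l ≤ b := by
    by_contra! hl
    simp [hB _ hl] at hil
  simp only [coe_product, Set.mem_prod, mem_coe, mem_range]
  exact ⟨hs (mem_Icc.2 ⟨by omega, hi⟩), by omega⟩

theorem pdMul_pdMul_right_apply_eq_sum (hA : OrderLE A a) (hB : OrderLE B b) (hC : OrderLE C c)
    {k : ℤ} {N : ℕ} (hN : a + b + c - k < N) :
    pdMul d A (pdMul d B C) k =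
      ∑ i ∈ Icc (k - b - c) a, ∑ j ∈ Icc (k - a - c) b, ∑ m ∈ range N, ∑ l ∈ range N,
        A i * (qbinom i m * qbinom j l) •
          d^[m] (B j * d^[l] (C (k - i - j + (m + l : ℕ)))) := by
  rw [pdMul_apply_eq_sum hA (hB.pdMul hC) (s := Icc (k - b - c) a) (N := N)
    (Icc_subset_Icc (by omega) le_rfl) (by omega)]
  refine sum_congr rfl fun i hi ↦ ?_
  rw [mem_Icc] at hi
  rw [sum_comm]
  refine sum_congr rfl fun m _ ↦ ?_
  rw [pdMul_apply_eq_sum hB hC (s := Icc (k - a - c) b) (N := N)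
    (Icc_subset_Icc (by omega) le_rfl) (by omega), ← sum_product', iterate_derivation_sum_smul,
    mul_sum, smul_sum, ← sum_product']
  refine sum_congr rfl fun ⟨j, l⟩ _ ↦ ?_
  have hC_index : k - i + m - j + l = k - i - j + (m + l : ℕ) := by push_cast; ring
  rw [hC_index, mul_smul_comm, mul_smul_comm, smul_smul]

theorem sum_left_exponent_eq_sum_right_exponent (hB : OrderLE B b) (hC : OrderLE C c) {i : ℤ}
    (hi : i ≤ a) (k : ℤ) (r s : ℕ) :
    ∑ p ∈ Icc (k - c) (a + b), qbinom p s • (d^[r] (B (p - i + r)) * d^[s] (C (k - p + s))) =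
      ∑ j ∈ Icc (k - a - c) b,
        qbinom (i + j - r) s • (d^[r] (B j) * d^[s] (C (k - i - j + (r + s : ℕ)))) := by
  let f (j : ℤ) : R :=
    qbinom (i + j - r) s • (d^[r] (B j) * d^[s] (C (k - i - j + (r + s : ℕ))))
  have hf {j : ℤ} (hj : f j ≠ 0) : j ≤ b ∧ k - i - j + (r + s : ℕ) ≤ c := by
    contrapose! hj
    rcases lt_or_ge b j with hjb | hjb
    · simp only [f, hB j hjb, iterate_map_zero, zero_mul, smul_zero]
    · simp only [f, hC _ (hj hjb), iterate_map_zero, mul_zero, smul_zero]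
  -- the substitution `p = i + j - r`
  rw [← sum_comp_add_right_eq_sum (s := Icc (k - c) (a + b)) (f := f) (c := r - i)
    (fun j hj ↦ by have := hf hj; rw [mem_Icc]; omega)
    (fun j hj ↦ by have := hf hj; rw [mem_Icc]; omega)]
  refine sum_congr rfl fun p _ ↦ ?_
  have hj : p + (r - i) = p - i + r := by ring
  have hp : i + (p - i + r) - r = p := by ring
  have hq : k - i - (p - i + r) + (r + s : ℕ) = k - p + s := by push_cast; ring
  simp only [f, hj, hp, hq]

theorem pdMul_pdMul_left_apply_eq_sum (hA : OrderLE A a) (hB : OrderLE B b) (hC : OrderLE C c)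
    {k : ℤ} {N : ℕ} (hN : a + b + c - k < N) :
    pdMul d (pdMul d A B) C k =
      ∑ i ∈ Icc (k - b - c) a, ∑ j ∈ Icc (k - a - c) b, ∑ r ∈ range N, ∑ s ∈ range N,
        A i * (qbinom i r * qbinom (i + j - r) s) •
          (d^[r] (B j) * d^[s] (C (k - i - j + (r + s : ℕ)))) := by
  rw [pdMul_apply_eq_sum (hA.pdMul hB) hC (s := Icc (k - c) (a + b)) (N := N)
    (Icc_subset_Icc le_rfl le_rfl) (by omega)]
  calc
    _ = ∑ p ∈ Icc (k - c) (a + b), ∑ s ∈ range N, ∑ i ∈ Icc (k - b - c) a, ∑ r ∈ range N,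
          A i * qbinom i r • qbinom p s •
            (d^[r] (B (p - i + r)) * d^[s] (C (k - p + s))) := by
      refine sum_congr rfl fun p hp ↦ sum_congr rfl fun s _ ↦ ?_
      rw [mem_Icc] at hp
      rw [pdMul_apply_eq_sum hA hB (s := Icc (k - b - c) a) (N := N)
        (Icc_subset_Icc (by omega) le_rfl) (by omega)]
      simp only [sum_mul, smul_sum, smul_mul_assoc, mul_smul_comm, mul_assoc,
        smul_comm (qbinom p s)]
    _ = _ := by
      rw [sum_comm_cycle]
      refine sum_congr rfl fun i hi ↦ ?_
      rw [sum_comm_cycle]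
      refine .trans (sum_congr rfl fun r _ ↦ ?_) sum_comm_cycle
      rw [sum_comm]
      refine sum_congr rfl fun s _ ↦ ?_
      simp only [← mul_sum, ← smul_sum, mul_smul,
        sum_left_exponent_eq_sum_right_exponent hB hC (mem_Icc.1 hi).2]

theorem pdMul_assoc (hA : OrderBdd A) (hB : OrderBdd B) (hC : OrderBdd C) :
    pdMul d (pdMul d A B) C = pdMul d A (pdMul d B C) := by
  obtain ⟨a, hA⟩ := hA
  obtain ⟨b, hB⟩ := hB
  obtain ⟨c, hC⟩ := hC
  ext k
  obtain ⟨N, hN⟩ : ∃ N : ℕ, a + b + c - k < N := ⟨(a + b + c - k).toNat + 1, by omega⟩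
  rw [pdMul_pdMul_left_apply_eq_sum hA hB hC hN, pdMul_pdMul_right_apply_eq_sum hA hB hC hN]
  refine sum_congr rfl fun i hi ↦ sum_congr rfl fun j hj ↦ ?_
  rw [mem_Icc] at hi hj
  have hC_zero (m : ℕ) (hm : N ≤ m) : C (k - i - j + m) = 0 := hC _ (by omega)
  simp only [← mul_sum]
  rw [sum_range_qbinom_smul_iterate d i j (B j) hC_zero]

/-- The value `V_X(L) = (LX)₊L − L(XL)₊` at `L` of the Gelfand–Dickey Hamiltonian vector field
associated with the symbol `X`. -/
def gdHamiltonian (d : Derivation ℚ R R) (X L : ℤ → R) : ℤ → R :=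
  pdMul d (pdPlus (pdMul d L X)) L - pdMul d L (pdPlus (pdMul d X L))

end Order

end

theorem gd_hamiltonian_preserves_diffops_general {R : Type*} [CommRing R] [Algebra ℚ R]
    (d : Derivation ℚ R R) {n : ℤ} {L X : ℤ → R} (hLtop : OrderLE L n)
    (hLdiff : IsDifferential L) (hX : OrderBdd X) :
    OrderLE (gdHamiltonian d X L) (n - 1) ∧ IsDifferential (gdHamiltonian d X L) := by
  constructor <;> intro k hk <;> rw [gdHamiltonian, Pi.sub_apply]
  · have hL : OrderBdd L := ⟨n, hLtop⟩
    rw [pdMul_pdPlus_left_apply hLtop (by omega), pdMul_pdPlus_right_apply hLtop (by omega),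
      pdMul_assoc hL hX hL, sub_self]
  · rw [(isDifferential_pdPlus _).pdMul hLdiff k hk, hLdiff.pdMul (isDifferential_pdPlus _) k hk,
      sub_self]

/-- if `L` is a monic differential operator of order `n` and `X = Q ∘ D⁻ⁿ`
with `Q` a differential operator, then the Gelfand–Dickey Hamiltonian vector
`V_X(L) = (LX)₊L − L(XL)₊` is a differential operator of order at most `n-1`; hence the
monic differential operators of order `n` are invariant under these Hamiltonian fields. -/
theorem gd_hamiltonian_preserves_diffops {R : Type*} [CommRing R] [Algebra ℚ R]
    (d : Derivation ℚ R R) (n : ℕ) (L Q : ℤ → R)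
    (hLmonic : L (n : ℤ) = 1) (hLtop : ∀ k : ℤ, (n : ℤ) < k → L k = 0)
    (hLdiff : ∀ k : ℤ, k < 0 → L k = 0)
    (hQdiff : ∀ k : ℤ, k < 0 → Q k = 0) (hQbdd : OrderBdd Q) :
    ∀ k : ℤ, ((n : ℤ) ≤ k ∨ k < 0) →
      (pdMul (⇑d) (pdPlus (pdMul (⇑d) L (pdMul (⇑d) Q (pdPow (-(n : ℤ)))))) L k
        - pdMul (⇑d) L (pdPlus (pdMul (⇑d) (pdMul (⇑d) Q (pdPow (-(n : ℤ)))) L)) k) = 0 := by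
  obtain ⟨htop, hdiff⟩ := gd_hamiltonian_preserves_diffops_general d hLtop hLdiff
    (hQbdd.pdMul (d := d) ⟨-n, orderLE_pdPow (-n)⟩)
  exact fun k hk ↦ hk.elim (fun h ↦ htop k (by omega)) (hdiff k)
end
end
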